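/- For any integers n ≥ 5 with n odd, (ℤ/2ℤ)^n is sequentially ternary. -/

import Mathlib

def SeqTernary (n : ℕ) : Prop :=
  ∃ v : ℕ → (Fin n → ZMod 2),
    Set.BijOn v (Set.Icc 1 (2 ^ n - 1)) {x | x ≠ 0} ∧
    ∀ i : ℕ, 2 ≤ i → i ≤ 2 ^ n - 2 → Even i → v (i - 1) + v i + v (i + 1) = 0

/-!
Remove the first two terms `a, y` of a ternary enumeration of `V`; what remains is a ternary walk
`R` from `b = -(a + y)` to some `z`. Let `K = {0, 1, ω, ω²}` be the field with four elements and
give the terms of `R` weights in `Kˣ` that themselves form a ternary walk, from `1` to `ω`.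
Multiplying the weights by `c ∈ K` produces four ternary walks in `K × V`, from `(c, b)` to
`(c * ω, z)`, which together cover `K × R`. The eleven remaining nonzero elements of `K × V`, those
over `a`, `y` and `0`, link the four walks into a ternary enumeration of `K × V`. As
`K × (ℤ/2ℤ)ⁿ ≃ (ℤ/2ℤ)ⁿ⁺²`, enumerations for `n = 5` and `n = 6`, found by computer search, start an
induction that reaches every `n ≥ 5`.
-/

/-- `TernaryWalk x z L` says that the list `L = [v₁, …, v₂ₖ₊₁]` goes from `v₁ = x` to `v₂ₖ₊₁ = z`
and that `vᵢ₋₁ + vᵢ + vᵢ₊₁ = 0` for every even `i`. Carrying the endpoints as indices is what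
allows walks to be linked end to end. -/
inductive TernaryWalk {G : Type*} [AddCommGroup G] : G → G → List G → Prop
  | single (x : G) : TernaryWalk x x [x]
  | cons {x y z w : G} {L : List G} (h : x + y + z = 0) (hL : TernaryWalk z w L) :
      TernaryWalk x w (x :: y :: L)

namespace TernaryWalk

variable {G H : Type*} [AddCommGroup G] [AddCommGroup H]

theorem append {a x y z d : G} {A B : List G} (hA : TernaryWalk a x A) (h : x + y + z = 0)
    (hB : TernaryWalk z d B) : TernaryWalk a d (A ++ y :: B) := by
  induction hA with
  | single => exact .cons h hB
  | cons h' _ ih => exact .cons h' (ih h)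

theorem reverse {x z : G} {L : List G} (hL : TernaryWalk x z L) : TernaryWalk z x L.reverse := by
  induction hL with
  | single x => exact .single x
  | @cons x y z w L h _ ih =>
    have h' : z + y + x = 0 := by rw [← h]; abel
    simpa using ih.append h' (.single x)

theorem map (f : G →+ H) {x z : G} {L : List G} (hL : TernaryWalk x z L) :
    TernaryWalk (f x) (f z) (L.map f) := by
  induction hL with
  | single x => exact .single (f x)
  | cons h _ ih => exact .cons (by rw [← map_add, ← map_add, h, map_zero]) ih

theorem exists_cons {x z : G} {L : List G} (hL : TernaryWalk x z L) : ∃ M, L = x :: M := by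
  cases hL <;> exact ⟨_, rfl⟩

theorem zip {x z : G} {x' z' : H} {L : List G} {L' : List H} (hL : TernaryWalk x z L)
    (hL' : TernaryWalk x' z' L') (hlen : L.length = L'.length) :
    TernaryWalk (x, x') (z, z') (L.zip L') := by
  induction hL generalizing x' L' with
  | single x =>
    cases hL' with
    | single => exact .single _
    | cons => simp at hlen
  | cons h _ ih =>
    cases hL' with
    | single => simp at hlen
    | cons h' hL' => exact .cons (Prod.ext h h') (ih hL' (by simpa using hlen))

theorem odd_length {x z : G} {L : List G} (hL : TernaryWalk x z L) : Odd L.length := by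
  induction hL with
  | single => exact odd_one
  | cons _ _ ih => simpa [Nat.odd_add_one] using ih

theorem getD_add_getD_add_getD_eq_zero {x z : G} {L : List G} (hL : TernaryWalk x z L) (k : ℕ)
    (hk : 2 * k + 2 < L.length) :
    L.getD (2 * k) 0 + L.getD (2 * k + 1) 0 + L.getD (2 * k + 2) 0 = 0 := by
  induction hL generalizing k with
  | single => simp at hk
  | cons h hL ih =>
    cases k with
    | zero =>
      obtain ⟨M, rfl⟩ := hL.exists_cons
      simpa using h
    | succ k => simpa [Nat.mul_succ] using ih k (by simp at hk; omega)

end TernaryWalk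

/-- `G` has a ternary enumeration: the terms of some ternary walk are the nonzero elements of `G`,
each occurring once. The last condition is encoded by the length of the walk. -/
def HasTernaryEnumeration (G : Type*) [AddCommGroup G] : Prop :=
  ∃ (x z : G) (L : List G), TernaryWalk x z L ∧ L.length + 1 = Nat.card G ∧ ∀ v ≠ 0, v ∈ L

theorem nodup_cons_of_length_add_one_eq_card {α : Type*} {a : α} {L : List α}
    (hlen : L.length + 1 = Nat.card α) (hL : ∀ v ≠ a, v ∈ L) : (a :: L).Nodup := by
  classical
  have : Finite α := Nat.finite_of_card_ne_zero (by omega)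
  have := Fintype.ofFinite α
  have huniv : (a :: L).toFinset = Finset.univ := by
    ext v
    simpa [or_iff_not_imp_left] using hL v
  rw [← Multiset.coe_nodup, ← Multiset.toFinset_card_eq_card_iff_nodup]
  change (a :: L).toFinset.card = (a :: L).length
  rw [huniv, Finset.card_univ, ← Nat.card_eq_fintype_card, ← hlen, List.length_cons]

theorem HasTernaryEnumeration.congr {G H : Type*} [AddCommGroup G] [AddCommGroup H]
    (hG : HasTernaryEnumeration G) (e : G ≃+ H) : HasTernaryEnumeration H := by
  obtain ⟨x, z, L, hL, hlen, hmem⟩ := hG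
  refine ⟨e x, e z, L.map e, hL.map e.toAddMonoidHom, ?_, fun v hv => ?_⟩
  · rw [List.length_map, hlen, Nat.card_congr e.toEquiv]
  · exact List.mem_map.2 ⟨e.symm v, hmem _ (by simpa using hv), e.apply_symm_apply v⟩

theorem HasTernaryEnumeration.seqTernary {n : ℕ} (h : HasTernaryEnumeration (Fin n → ZMod 2)) :
    SeqTernary n := by
  obtain ⟨x, z, L, hL, hcard, hmem⟩ := h
  obtain ⟨hzero, hnodup⟩ := List.nodup_cons.1 (nodup_cons_of_length_add_one_eq_card hcard hmem)
  have hlen : L.length + 1 = 2 ^ n := by simpa using hcard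
  have hget {i : ℕ} (hi : i ∈ Set.Icc 1 (2 ^ n - 1)) :
      ∃ h : i - 1 < L.length, L.getD (i - 1) 0 = L[i - 1] := by
    obtain ⟨h₁, h₂⟩ := hi
    exact ⟨by omega, List.getD_eq_getElem _ _ (by omega)⟩
  refine ⟨fun i => L.getD (i - 1) 0, ⟨fun i hi => ?_, fun i hi j hj hij => ?_, fun v hv => ?_⟩, ?_⟩
  · obtain ⟨h, hi⟩ := hget hi
    exact fun h0 => hzero ((hi.symm.trans h0) ▸ List.getElem_mem h)
  · obtain ⟨_, hi'⟩ := hget hi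
    obtain ⟨_, hj'⟩ := hget hj
    have hij' : i - 1 = j - 1 := hnodup.getElem_inj_iff.1 (hi'.symm.trans (hij.trans hj'))
    have := hi.1
    have := hj.1
    omega
  · obtain ⟨i, hi, rfl⟩ := List.getElem_of_mem (hmem v hv)
    exact ⟨i + 1, ⟨by omega, by omega⟩, List.getD_eq_getElem _ _ hi⟩
  · rintro i hi₂ hi ⟨k, rfl⟩
    obtain ⟨k, rfl⟩ : ∃ j, k = j + 1 := ⟨k - 1, by omega⟩
    convert hL.getD_add_getD_add_getD_eq_zero k (by omega) using 4 <;> omega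

section FourElements

variable {K V : Type*} [Field K]

theorem charP_two_of_card_eq_four (hK : Nat.card K = 4) : CharP K 2 := by
  have : Finite K := Nat.finite_of_card_ne_zero (by omega)
  have := Fintype.ofFinite K
  have h4 : (2 : K) * 2 = 0 := by
    have hcast : ((4 : ℕ) : K) = 0 := by
      rw [← hK, Nat.card_eq_fintype_card, Nat.cast_card_eq_zero]
    linear_combination hcast
  exact CharTwo.of_one_ne_zero_of_two_eq_zero one_ne_zero (mul_self_eq_zero.1 h4)

theorem sq_add_self_add_one_eq_zero_of_card_eq_four (hK : Nat.card K = 4) {c : K} (h0 : c ≠ 0)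
    (h1 : c ≠ 1) : c ^ 2 + c + 1 = 0 := by
  have : Finite K := Nat.finite_of_card_ne_zero (by omega)
  have := Fintype.ofFinite K
  have hpow : c ^ 4 = c := by rw [← hK, Nat.card_eq_fintype_card, FiniteField.pow_card]
  refine (mul_eq_zero.1 ?_).resolve_left (mul_ne_zero h0 (sub_ne_zero.2 h1))
  linear_combination hpow

theorem exists_sq_add_self_add_one_eq_zero_of_card_eq_four (hK : Nat.card K = 4) :
    ∃ ω : K, ω ^ 2 + ω + 1 = 0 ∧ ∀ c : K, c = 0 ∨ c = 1 ∨ c = ω ∨ c = ω ^ 2 := by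
  obtain ⟨ω, hω0, hω1⟩ : ∃ ω : K, ω ≠ 0 ∧ ω ≠ 1 := by
    by_contra! h
    have hcard := Set.ncard_le_ncard (s := Set.univ) (t := {(0 : K), 1})
      fun c _ => or_iff_not_imp_left.2 (h c)
    rw [Set.ncard_univ, hK, Set.ncard_pair zero_ne_one] at hcard
    omega
  have hω := sq_add_self_add_one_eq_zero_of_card_eq_four hK hω0 hω1
  refine ⟨ω, hω, fun c => ?_⟩
  by_cases h0 : c = 0
  · exact .inl h0
  by_cases h1 : c = 1
  · exact .inr (.inl h1)
  have hfactor : (c - ω) * (c - ω ^ 2) = 0 := by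
    linear_combination sq_add_self_add_one_eq_zero_of_card_eq_four hK h0 h1 + (ω - 1 - c) * hω
  simpa [h0, h1, sub_eq_zero] using mul_eq_zero.1 hfactor

theorem exists_ternaryWalk_one_of_sq_add_self_add_one_eq_zero {ω : K} (hω : ω ^ 2 + ω + 1 = 0)
    (k : ℕ) : ∃ w : List K, TernaryWalk 1 ω w ∧ w.length = 2 * k + 5 ∧ 0 ∉ w := by
  have h0 : ω ≠ 0 := by rintro rfl; simp at hω
  have h0' (i : ℕ) : 0 ≠ ω ^ i := (pow_ne_zero i h0).symm
  induction k using Nat.twoStepInduction with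
  | zero =>
    refine ⟨[1, ω, ω ^ 2, 1, ω], .cons ?_ (.cons ?_ (.single ω)), rfl, by simp [h0.symm, h0']⟩ <;>
      linear_combination hω
  | one =>
    refine ⟨[1, ω ^ 2, ω, 1, ω ^ 2, 1, ω], .cons ?_ (.cons ?_ (.cons ?_ (.single ω))), rfl,
      by simp [h0.symm, h0']⟩ <;> linear_combination hω
  | more k ih _ =>
    obtain ⟨w, hw, hlen, hmem⟩ := ih
    refine ⟨1 :: ω :: ω ^ 2 :: ω :: w, .cons ?_ (.cons ?_ hw), ?_, by simp [h0.symm, h0', hmem]⟩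
    · linear_combination hω
    · linear_combination hω
    · simp only [List.length_cons, hlen]; ring

/-- The lift of a list `L` in `V` to `K × V` whose `K`-components are the weights `w` scaled by `c`.
If no weight vanishes, the lifts for varying `c` together cover `K × L`. -/
def weightedLift (w : List K) (L : List V) (c : K) : List (K × V) :=
  (w.map (c * ·)).zip L

theorem exists_mem_weightedLift {w : List K} {L : List V} (hw : 0 ∉ w)
    (hlen : w.length = L.length) {v : V} (hv : v ∈ L) (e : K) :
    ∃ c, (e, v) ∈ weightedLift w L c := by
  obtain ⟨i, hi, rfl⟩ := List.getElem_of_mem hv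
  have hne : w[i] ≠ 0 := fun h => hw (h ▸ List.getElem_mem _)
  refine ⟨e / w[i], List.mem_iff_getElem.2 ⟨i, by simp [weightedLift, hlen, hi], ?_⟩⟩
  simp [weightedLift, hne]

variable [AddCommGroup V]

theorem TernaryWalk.weightedLift {s t : K} {w : List K} {x z : V} {L : List V}
    (hw : TernaryWalk s t w) (hL : TernaryWalk x z L) (hlen : w.length = L.length) (c : K) :
    TernaryWalk (c * s, x) (c * t, z) (weightedLift w L c) :=
  (hw.map (AddMonoidHom.mulLeft c)).zip hL (by simpa using hlen)

/-- The four lists `S 0`, `S 1`, `S ω`, `S ω²` in `K × V`, with the first and third reversed, linked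
by the eleven nonzero elements of `K × {0, a, y}`. When each `S c` is a ternary walk from `(c, b)`
to `(c * ω, z)` and `a + y + b = 0`, the result is again a ternary walk. -/
def weave (ω : K) (a y : V) (S : K → List (K × V)) : List (K × V) :=
  (S 0).reverse ++ (0, y) :: (0, a) :: (ω, 0) :: (ω, a) :: (ω ^ 2, y) ::
    (S 1 ++ (1, 0) :: ((S ω).reverse ++ (ω ^ 2, a) :: (1, y) :: (ω ^ 2, 0) :: (ω, y) :: (1, a) ::
      S (ω ^ 2)))

theorem TernaryWalk.weave [CharP K 2] [Module (ZMod 2) V] {ω : K} (hω : ω ^ 2 + ω + 1 = 0)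
    {a y b z : V} (h : a + y + b = 0) {S : K → List (K × V)}
    (hS : ∀ c, TernaryWalk (c, b) (c * ω, z) (S c)) :
    TernaryWalk (0 * ω, z) (ω ^ 2 * ω, z) (weave ω a y S) := by
  refine (hS 0).reverse.append ?_ <| .cons ?_ <| .cons ?_ <| (hS 1).append ?_ <|
    (hS ω).reverse.append ?_ <| .cons ?_ <| .cons ?_ <| hS (ω ^ 2)
  -- Up to order, the `K`-components of each link are `c, c, 0` or `1, ω, ω²`, and its
  -- `V`-components are `v, v, 0` or `a, y, b`.
  all_goals refine Prod.ext ?_ ?_ <;> simp only [Prod.fst_add, Prod.snd_add, Prod.fst_zero,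
    Prod.snd_zero, zero_add, add_zero, CharTwo.add_self_eq_zero, ZModModule.add_self]
  all_goals first
    | linear_combination hω
    | simpa only [add_comm, add_left_comm] using h

theorem length_weave (ω : K) (a y : V) (S : K → List (K × V)) :
    (weave ω a y S).length =
      (S 0).length + (S 1).length + (S ω).length + (S (ω ^ 2)).length + 11 := by
  simp only [weave, List.length_append, List.length_cons, List.length_reverse]
  ring

theorem mem_weave_of_mem {ω : K} (hK : ∀ c : K, c = 0 ∨ c = 1 ∨ c = ω ∨ c = ω ^ 2) {a y : V}
    {S : K → List (K × V)} {c : K} {p : K × V} (hp : p ∈ S c) : p ∈ weave ω a y S := by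
  rcases hK c with rfl | rfl | rfl | rfl <;> simp [weave, hp]

theorem mk_mem_weave {ω : K} (hK : ∀ c : K, c = 0 ∨ c = 1 ∨ c = ω ∨ c = ω ^ 2) {a y v : V}
    (S : K → List (K × V)) {e : K} (hne : (e, v) ≠ 0) (hv : v = 0 ∨ v = a ∨ v = y) :
    (e, v) ∈ weave ω a y S := by
  rcases hv with rfl | rfl | rfl
  · have h0 : e ≠ 0 := by rintro rfl; exact hne rfl
    rcases (hK e).resolve_left h0 with rfl | rfl | rfl <;> simp [weave]
  all_goals rcases hK e with rfl | rfl | rfl | rfl <;> simp [weave]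

theorem HasTernaryEnumeration.prod [Module (ZMod 2) V] (hK : Nat.card K = 4)
    (hV : HasTernaryEnumeration V) (hcard : 8 ≤ Nat.card V) :
    HasTernaryEnumeration (K × V) := by
  obtain ⟨a, z, L, hL, hlen, hmem⟩ := hV
  cases hL with
  | single =>
    simp only [List.length_singleton] at hlen
    omega
  | @cons _ y b _ R h hR =>
    simp only [List.length_cons] at hlen
    have := charP_two_of_card_eq_four hK
    obtain ⟨ω, hω, hcases⟩ := exists_sq_add_self_add_one_eq_zero_of_card_eq_four hK
    obtain ⟨m, hm⟩ := hR.odd_length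
    obtain ⟨k, hk⟩ : ∃ k, R.length = 2 * k + 5 := ⟨m - 2, by omega⟩
    obtain ⟨w, hw, hwlen, hw0⟩ := exists_ternaryWalk_one_of_sq_add_self_add_one_eq_zero hω k
    have hwR : w.length = R.length := hwlen.trans hk.symm
    have hS (c : K) : TernaryWalk (c, b) (c * ω, z) (weightedLift w R c) := by
      simpa using hw.weightedLift hR hwR c
    refine ⟨_, _, weave ω a y (weightedLift w R), .weave hω h hS, ?_, fun ⟨e, v⟩ hne => ?_⟩
    · have hSlen (c : K) : (weightedLift w R c).length = R.length := by simp [weightedLift, hwR]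
      rw [length_weave, Nat.card_prod, hK, hSlen, hSlen, hSlen, hSlen]
      omega
    · by_cases hv : v ∈ R
      · obtain ⟨c, hc⟩ := exists_mem_weightedLift hw0 hwR hv e
        exact mem_weave_of_mem hcases hc
      · refine mk_mem_weave hcases _ hne (or_iff_not_imp_left.2 fun hv0 => ?_)
        simpa [hv] using hmem v hv0

end FourElements

/-- The vector in `(ℤ/2ℤ)ⁿ` whose coordinates are the binary digits of `k`, least significant
first. -/
def binaryVector (n k : ℕ) : Fin n → ZMod 2 :=
  fun i => if k.testBit i then 1 else 0

theorem hasTernaryEnumeration_five : HasTernaryEnumeration (Fin 5 → ZMod 2) := by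
  refine ⟨binaryVector 5 1, binaryVector 5 29,
    [1, 5, 4, 16, 20, 31, 11, 23, 28, 30, 2, 15, 13, 27, 22, 14, 24, 10, 18, 3, 17, 8, 25, 12, 21,
      6, 19, 9, 26, 7, 29].map (binaryVector 5),
    ?_, by simp, by decide⟩
  repeat (apply TernaryWalk.cons; swap)
  · exact .single _
  all_goals decide

theorem hasTernaryEnumeration_six : HasTernaryEnumeration (Fin 6 → ZMod 2) := by
  refine ⟨binaryVector 6 1, binaryVector 6 47,
    [1, 54, 55, 2, 53, 20, 33, 59, 26, 4, 30, 12, 18, 56, 42, 23, 61, 58, 7, 22, 17, 24, 9, 46, 39,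
      25, 62, 52, 10, 34, 40, 51, 27, 48, 43, 15, 36, 13, 41, 60, 21, 5, 16, 3, 19, 44, 63, 31, 32,
      38, 6, 37, 35, 14, 45, 28, 49, 8, 57, 11, 50, 29, 47].map (binaryVector 6),
    ?_, by simp, by decide⟩
  repeat (apply TernaryWalk.cons; swap)
  · exact .single _
  all_goals decide

theorem hasTernaryEnumeration_pi_add_five :
    ∀ n : ℕ, HasTernaryEnumeration (Fin (n + 5) → ZMod 2)
  | 0 => hasTernaryEnumeration_five
  | 1 => hasTernaryEnumeration_six
  | n + 2 => by
    have hcard : 8 ≤ Nat.card (Fin (n + 5) → ZMod 2) := by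
      simpa using Nat.pow_le_pow_right two_pos (show 3 ≤ n + 5 by omega)
    have hK : Nat.card (GaloisField 2 2) = 4 := GaloisField.card 2 2 two_ne_zero
    have hrank : Module.finrank (ZMod 2) (GaloisField 2 2 × (Fin (n + 5) → ZMod 2)) =
        Module.finrank (ZMod 2) (Fin (n + 2 + 5) → ZMod 2) := by
      rw [Module.finrank_prod, GaloisField.finrank 2 two_ne_zero, Module.finrank_fin_fun,
        Module.finrank_fin_fun]
      ring
    exact ((hasTernaryEnumeration_pi_add_five n).prod hK hcard).congr
      (LinearEquiv.ofFinrankEq _ _ hrank).toAddEquiv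

theorem stmt17_general (n : ℕ) (hn : 5 ≤ n) : SeqTernary n := by
  obtain ⟨k, rfl⟩ := Nat.exists_eq_add_of_le' hn
  exact (hasTernaryEnumeration_pi_add_five k).seqTernary

theorem stmt17 (n : ℕ) (hn : 5 ≤ n) (hodd : Odd n) : SeqTernary n :=
  stmt17_general n hn
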